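/- arXiv:2305.13350 — 3 statements merged into one kernel-verified Lean document; each statement's English description precedes it below -/
import Mathlib

section
/- Let p > 0 and let m be an integer with m > p + 1. Let f : ℝ → ℂ be m times continuously differentiable with f^{(n)} ∈ L¹(ℝ) for every 0 ≤ n ≤ m, and suppose also that x ↦ x·f(x) is in L¹(ℝ). Let F = 𝓕f and define the fractional derivative f^{(p)}(x) = (1/(2π)) ∫_ℝ (iω)^p F(ω) e^{iωx} dω. Then this integral converges absolutely for every x, f^{(p)} is continuous and integrable on ℝ, and its Fourier transform satisfies 𝓕(f^{(p)})(ω) = (iω)^p F(ω) for all real ω. -/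
open MeasureTheory Real

/-!
Put `n = m - 1 > p` and factor the symbol as
`(iω)^p F = [(iω)^p (1 + iω)^(-n)] · [(1 + iω)^n F]`.
The second factor is the Fourier transform of `h = (1 + d/dx)^n f`, which is continuous, bounded
and integrable. The first is the Fourier transform of an integrable kernel `κ`: with `u = 1 + iω`,
the binomial series gives
`(u - 1)^p u^(-n) = ∑ k, (-1)^k (p choose k) u^(-(n - p + k))`,
where `u^(-a)` is the Fourier transform of the `Gamma(a, 1)` density, of `L¹` norm `1`, and
`∑ k, |p choose k| < ∞` because `p > 0`; so the series converges in `L¹`. Hence `κ ⋆ h` is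
continuous and integrable with Fourier transform `(iω)^p F`, and Fourier inversion identifies it
with the fractional derivative.
-/

open scoped FourierTransform Convolution Topology
open Complex (I)

section BinomialCoefficients

lemma choose_succ_mul_succ {R : Type*} [Ring R] [BinomialRing R] (a : R) (k : ℕ) :
    Ring.choose a (k + 1) * (k + 1) = Ring.choose a k * (a - k) := by
  have h := Ring.choose_smul_choose a (Nat.le_succ k)
  rw [Nat.succ_eq_add_one, Nat.choose_succ_self_right, Nat.add_sub_cancel_left,
    Ring.choose_one_right, nsmul_eq_mul, Nat.cast_comm, Nat.cast_succ] at h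
  exact h

lemma abs_choose_succ_mul_succ {p : ℝ} {k : ℕ} (hpk : p ≤ k) :
    |Ring.choose p (k + 1)| * (k + 1) = |Ring.choose p k| * (k - p) := by
  have h := congrArg abs (choose_succ_mul_succ p k)
  rwa [abs_mul, abs_mul, abs_sub_comm p, abs_of_nonneg (sub_nonneg.2 hpk),
    abs_of_pos (by positivity : (0 : ℝ) < k + 1)] at h

/- Once `k ≥ p`, the quantity `k * |p.choose k|` decreases by exactly `p * |p.choose k|`. -/
theorem summable_abs_choose {p : ℝ} (hp : 0 < p) : Summable fun k => |Ring.choose p k| := by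
  set N := ⌈p⌉₊
  let b : ℕ → ℝ := fun k => (k + N : ℕ) * |Ring.choose p (k + N)|
  have step (k : ℕ) : p * |Ring.choose p (k + N)| = b k - b (k + 1) := by
    have hpk : p ≤ (k + N : ℕ) := (Nat.le_ceil p).trans (by simp [N])
    have h := abs_choose_succ_mul_succ hpk
    simp only [b, Nat.add_right_comm k 1 N]
    push_cast at h ⊢
    linarith
  refine (summable_nat_add_iff N).1 <| (summable_mul_left_iff hp.ne').1 <|
    summable_of_sum_range_le (c := b 0) (fun k => by positivity) fun n => ?_
  calc ∑ k ∈ Finset.range n, p * |Ring.choose p (k + N)|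
      = b 0 - b n := by simp_rw [step, Finset.sum_range_sub']
    _ ≤ b 0 := sub_le_self _ (by positivity)

end BinomialCoefficients

section ComplexPowers

lemma mul_cpow_of_re_pos {z w : ℂ} (hz : 0 < z.re) (hw : 0 < w.re) (a : ℂ) :
    (z * w) ^ a = z ^ a * w ^ a := by
  have hz0 : z ≠ 0 := fun h => by simp [h] at hz
  have hw0 : w ≠ 0 := fun h => by simp [h] at hw
  have hargz := abs_lt.1 (Complex.abs_arg_lt_pi_div_two_iff.2 (Or.inl hz))
  have hargw := abs_lt.1 (Complex.abs_arg_lt_pi_div_two_iff.2 (Or.inl hw))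
  have hlog : Complex.log (z * w) = Complex.log z + Complex.log w :=
    Complex.log_mul hz0 hw0 ⟨by linarith, by linarith⟩
  rw [Complex.cpow_def_of_ne_zero (mul_ne_zero hz0 hw0), Complex.cpow_def_of_ne_zero hz0,
    Complex.cpow_def_of_ne_zero hw0, hlog, add_mul, Complex.exp_add]

theorem hasSum_choose_mul_pow_one_add_cpow {z : ℂ} (hz : ‖z‖ < 1) (a : ℂ) :
    HasSum (fun k : ℕ => Ring.choose a k * z ^ k) ((1 + z) ^ a) := by
  have hball : z ∈ Metric.eball (0 : ℂ) 1 := by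
    simpa [edist_eq_enorm_sub, enorm_eq_nnnorm, ← NNReal.coe_lt_coe] using hz
  have h := Complex.one_add_cpow_hasFPowerSeriesOnBall_zero (a := a).hasSum hball
  simpa only [binomialSeries_apply, List.ofFn_const, List.prod_replicate, smul_eq_mul, zero_add]
    using h

theorem hasSum_sub_one_cpow_mul_cpow_neg {u : ℂ} (hre : 0 < u.re) (hu : 1 < ‖u‖) (a b : ℂ) :
    HasSum (fun k : ℕ => (-1) ^ k * Ring.choose a k * u ^ (-(b - a + k)))
      ((u - 1) ^ a * u ^ (-b)) := by
  have hu0 : u ≠ 0 := fun h => by simp [h] at hre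
  have hnorm : ‖-u⁻¹‖ < 1 := by rw [norm_neg, norm_inv]; exact inv_lt_one_of_one_lt₀ hu
  have hre' : 0 < (1 + -u⁻¹).re := by
    have := (abs_lt.1 ((Complex.abs_re_le_norm _).trans_lt hnorm)).1
    rw [Complex.add_re, Complex.one_re]
    linarith
  have hfactor : u - 1 = (1 + -u⁻¹) * u := by field_simp; ring
  rw [hfactor, mul_cpow_of_re_pos hre' hre, mul_assoc, ← Complex.cpow_add _ _ hu0]
  refine ((hasSum_choose_mul_pow_one_add_cpow hnorm a).mul_right _).congr_fun fun k => ?_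
  rw [show -(b - a + k) = a + -b + -(k : ℂ) by ring, Complex.cpow_add _ _ hu0,
    Complex.cpow_neg, Complex.cpow_natCast, neg_pow u⁻¹, inv_pow]
  ring

end ComplexPowers

section GammaDistribution

open ProbabilityTheory Filter

lemma integrable_gammaPDFReal {a r : ℝ} (ha : 0 < a) (hr : 0 < r) :
    Integrable (gammaPDFReal a r) := by
  rw [← lintegral_ofReal_ne_top_iff_integrable (by fun_prop)
    (ae_of_all _ (gammaPDFReal_nonneg ha hr))]
  exact (lintegral_gammaPDF_eq_one ha hr).trans_ne ENNReal.one_ne_top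

lemma integral_gammaPDFReal {a r : ℝ} (ha : 0 < a) (hr : 0 < r) :
    ∫ t, gammaPDFReal a r t = 1 := by
  rw [integral_eq_lintegral_of_nonneg_ae (ae_of_all _ (gammaPDFReal_nonneg ha hr)) (by fun_prop)]
  exact congrArg ENNReal.toReal (lintegral_gammaPDF_eq_one ha hr)

section

variable {E : Type*} [NormedAddCommGroup E] [NormedSpace ℝ E] {a r : ℝ}

lemma integral_gammaMeasure (ha : 0 < a) (hr : 0 < r) (g : ℝ → E) :
    ∫ t, g t ∂gammaMeasure a r = ∫ t, gammaPDFReal a r t • g t := by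
  rw [gammaMeasure, integral_withDensity_eq_integral_toReal_smul (by unfold gammaPDF; fun_prop)
    (by simp [gammaPDF])]
  simp [gammaPDF, ENNReal.toReal_ofReal (gammaPDFReal_nonneg ha hr _)]

lemma integrable_gammaMeasure_iff (ha : 0 < a) (hr : 0 < r) {g : ℝ → E} :
    Integrable g (gammaMeasure a r) ↔ Integrable fun t => gammaPDFReal a r t • g t := by
  rw [gammaMeasure, integrable_withDensity_iff_integrable_smul' (by unfold gammaPDF; fun_prop)
    (by simp [gammaPDF])]
  simp [gammaPDF, ENNReal.toReal_ofReal (gammaPDFReal_nonneg ha hr _)]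

end

lemma gammaPDFReal_mul_exp {a r x : ℝ} (hr : 0 < r) (hx : x < r) (t : ℝ) :
    gammaPDFReal a r t * exp (x * t) = (1 - x / r) ^ (-a) * gammaPDFReal a (r - x) t := by
  have hpos : 0 < 1 - x / r := sub_pos.2 ((div_lt_one hr).2 hx)
  have hrate : r ^ a = (1 - x / r) ^ (-a) * (r - x) ^ a := by
    rw [show r - x = (1 - x / r) * r by field_simp, mul_rpow hpos.le hr.le, rpow_neg hpos.le,
      inv_mul_cancel_left₀ (rpow_pos_of_pos hpos a).ne']
  have hexp : exp (-(r * t)) * exp (x * t) = exp (-((r - x) * t)) := by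
    rw [← exp_add]; ring_nf
  unfold gammaPDFReal
  split_ifs
  · rw [hrate, ← hexp]; ring
  · simp

variable {a r : ℝ}

lemma Iio_subset_integrableExpSet_id_gammaMeasure (ha : 0 < a) (hr : 0 < r) :
    Set.Iio r ⊆ integrableExpSet id (gammaMeasure a r) := fun x hx => by
  simp only [integrableExpSet, Set.mem_ofPred_eq, integrable_gammaMeasure_iff ha hr, smul_eq_mul,
    id_eq, gammaPDFReal_mul_exp hr hx]
  exact (integrable_gammaPDFReal ha (sub_pos.2 hx)).const_mul _

lemma mgf_id_gammaMeasure (ha : 0 < a) (hr : 0 < r) {x : ℝ} (hx : x < r) :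
    mgf id (gammaMeasure a r) x = (1 - x / r) ^ (-a) := by
  simp only [mgf, integral_gammaMeasure ha hr, smul_eq_mul, id_eq, gammaPDFReal_mul_exp hr hx,
    integral_const_mul, integral_gammaPDFReal ha (sub_pos.2 hx), mul_one]

lemma one_sub_div_mem_slitPlane (hr : 0 < r) {z : ℂ} (hz : z.re < r) :
    1 - z / r ∈ Complex.slitPlane :=
  Or.inl <| by simpa [Complex.div_ofReal_re] using (div_lt_one hr).2 hz

theorem complexMGF_id_gammaMeasure (ha : 0 < a) (hr : 0 < r) {z : ℂ} (hz : z.re < r) :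
    complexMGF id (gammaMeasure a r) z = (1 - z / r) ^ (-a : ℂ) := by
  have hopen : IsOpen {z : ℂ | z.re < r} := isOpen_lt Complex.continuous_re continuous_const
  have hmgf : AnalyticOnNhd ℂ (complexMGF id (gammaMeasure a r)) {z | z.re < r} :=
    (differentiableOn_complexMGF.mono fun z hz => interior_maximal
      (Iio_subset_integrableExpSet_id_gammaMeasure ha hr) isOpen_Iio hz).analyticOnNhd hopen
  have hpow : AnalyticOnNhd ℂ (fun z : ℂ => (1 - z / r) ^ (-a : ℂ)) {z | z.re < r} :=
    DifferentiableOn.analyticOnNhd (fun z hz => ((by fun_prop : DifferentiableAt ℂ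
      (fun z : ℂ => 1 - z / r) z).cpow_const (one_sub_div_mem_slitPlane hr hz)
      ).differentiableWithinAt) hopen
  have hreal : ∀ᶠ x : ℝ in 𝓝[≠] 0,
      complexMGF id (gammaMeasure a r) x = (1 - x / r) ^ (-a : ℂ) := by
    filter_upwards [nhdsWithin_le_nhds (Iio_mem_nhds hr)] with x hx
    rw [complexMGF_ofReal, mgf_id_gammaMeasure ha hr hx,
      Complex.ofReal_cpow (sub_nonneg.2 ((div_le_one hr).2 (Set.mem_Iio.1 hx).le))]
    push_cast
    rfl
  have hofReal : Tendsto Complex.ofReal (𝓝[≠] 0) (𝓝[≠] 0) :=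
    tendsto_nhdsWithin_iff.2 ⟨(Complex.continuous_ofReal.tendsto' 0 0 rfl).mono_left
      nhdsWithin_le_nhds, eventually_mem_nhdsWithin.mono fun x hx => by simpa using hx⟩
  exact hmgf.eqOn_of_preconnected_of_frequently_eq hpow
    (convex_halfSpace_re_lt r).isPreconnected (by simpa using hr)
    (hofReal.frequently hreal.frequently) hz

theorem fourier_gammaPDFReal (ha : 0 < a) (hr : 0 < r) (ξ : ℝ) :
    𝓕 (fun t => (gammaPDFReal a r t : ℂ)) ξ = (1 + 2 * π * I * ξ / r) ^ (-a : ℂ) := by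
  have h := complexMGF_id_gammaMeasure ha hr (z := -(2 * π * I * ξ)) (by simpa using hr)
  rw [neg_div, sub_neg_eq_add] at h
  rw [← h, complexMGF, integral_gammaMeasure ha hr, Real.fourier_real_eq_integral_exp_smul]
  congr 1 with t
  simp only [smul_eq_mul, Complex.real_smul, id_eq]
  rw [mul_comm]
  push_cast
  ring_nf

end GammaDistribution

section FourierIntegral

variable {V E : Type*} [NormedAddCommGroup V] [InnerProductSpace ℝ V] [FiniteDimensional ℝ V]
  [MeasurableSpace V] [BorelSpace V] [NormedAddCommGroup E] [NormedSpace ℂ E]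

lemma continuous_fourierIntegral {f : V → E} (hf : Integrable f) : Continuous (𝓕 f) :=
  VectorFourier.fourierIntegral_continuous continuous_fourierChar (innerSL ℝ).continuous₂ hf

lemma norm_fourierIntegral_le_integral_norm (f : V → E) (ξ : V) : ‖𝓕 f ξ‖ ≤ ∫ v, ‖f v‖ :=
  VectorFourier.norm_fourierIntegral_le_integral_norm 𝐞 volume (innerₗ V) f ξ

lemma fourierIntegral_const_smul (c : ℂ) (f : V → E) (ξ : V) : 𝓕 (c • f) ξ = c • 𝓕 f ξ :=
  congrFun (VectorFourier.fourierIntegral_const_smul 𝐞 volume (innerₗ V) f c) ξ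

lemma fourierIntegral_add {f g : V → E} (hf : Integrable f) (hg : Integrable g) (ξ : V) :
    𝓕 (f + g) ξ = 𝓕 f ξ + 𝓕 g ξ :=
  congrFun (VectorFourier.fourierIntegral_add continuous_fourierChar (innerSL ℝ).continuous₂
    hf hg) ξ

theorem exists_integrable_hasSum_fourier [CompleteSpace E] {ι : Type*} {g : ι → V → E}
    (hg : ∀ i, Integrable (g i)) (hsum : Summable fun i => ∫ v, ‖g i v‖) :
    ∃ κ : V → E, Integrable κ ∧ ∀ ξ, HasSum (fun i => 𝓕 (g i) ξ) (𝓕 κ ξ) := by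
  have hL1 : Summable fun i => (hg i).toL1 (g i) := .of_norm <| by
    simpa only [L1.norm_of_fun_eq_integral_norm] using hsum
  obtain ⟨κ, hκ⟩ := hL1
  refine ⟨κ, L1.integrable_coeFn κ, fun ξ => ?_⟩
  have h := (hκ.mapL (Lp.fourierTransformCLM V E)).mapL (BoundedContinuousFunction.evalCLM ℂ ξ)
  exact h.congr_fun fun i => fourier_congr_ae (hg i).coeFn_toL1.symm ξ

end FourierIntegral

section Kernel

lemma continuous_two_pi_I_mul_cpow {p : ℝ} (hp : 0 < p) :
    Continuous fun ξ : ℝ => (2 * π * I * ξ) ^ (p : ℂ) :=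
  continuous_iff_continuousAt.2 fun ξ =>
    (Complex.continuousAt_cpow_const_of_re_pos (Or.inl (by simp)) (by simpa using hp)).comp
      (f := fun ξ : ℝ => 2 * π * I * ξ) (by fun_prop)

lemma continuous_one_add_two_pi_I_mul_cpow (q : ℂ) :
    Continuous fun ξ : ℝ => (1 + 2 * π * I * ξ) ^ q :=
  Continuous.cpow (by fun_prop) (by fun_prop) fun ξ => Or.inl (by simp)

lemma one_add_two_pi_I_mul_ne_zero (ξ : ℝ) : 1 + 2 * π * I * (ξ : ℂ) ≠ 0 := fun h => by
  simpa using congrArg Complex.re h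

lemma sq_norm_one_add_two_pi_I_mul (ξ : ℝ) :
    ‖1 + 2 * π * I * (ξ : ℂ)‖ ^ 2 = 1 + (2 * π * ξ) ^ 2 := by
  have hre : (1 + 2 * π * I * (ξ : ℂ)).re = 1 := by simp
  have him : (1 + 2 * π * I * (ξ : ℂ)).im = 2 * π * ξ := by simp
  rw [Complex.sq_norm, Complex.normSq_apply, hre, him]
  ring

lemma one_lt_norm_one_add_two_pi_I_mul {ξ : ℝ} (hξ : ξ ≠ 0) :
    1 < ‖1 + 2 * π * I * (ξ : ℂ)‖ := by
  rw [← one_lt_sq_iff₀ (norm_nonneg _), sq_norm_one_add_two_pi_I_mul, lt_add_iff_pos_right]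
  positivity

theorem exists_integrable_fourier_eq_cpow_mul_cpow_neg {p q : ℝ} (hp : 0 < p) (hpq : p < q) :
    ∃ κ : ℝ → ℂ, Integrable κ ∧
      ∀ ξ : ℝ, 𝓕 κ ξ = (2 * π * I * ξ) ^ (p : ℂ) * (1 + 2 * π * I * ξ) ^ (-q : ℂ) := by
  let c (k : ℕ) : ℂ := (-1) ^ k * Ring.choose (p : ℂ) k
  let γ (k : ℕ) (t : ℝ) : ℂ := ProbabilityTheory.gammaPDFReal (q - p + k) 1 t
  have hshape (k : ℕ) : 0 < q - p + k := by have := sub_pos.2 hpq; positivity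
  have hγ (k : ℕ) : Integrable (γ k) := (integrable_gammaPDFReal (hshape k) one_pos).ofReal
  have hnorm (k : ℕ) : ∫ t, ‖(c k • γ k) t‖ = |Ring.choose p k| := by
    simp only [c, γ, Pi.smul_apply, ← Complex.ofReal_choose, norm_smul, norm_mul, norm_pow,
      norm_neg, norm_one, one_pow, one_mul, Complex.norm_real, Real.norm_eq_abs,
      integral_const_mul, integral_gammaPDFReal (hshape k) one_pos, mul_one,
      abs_of_nonneg (ProbabilityTheory.gammaPDFReal_nonneg (hshape k) one_pos _)]
  obtain ⟨κ, hκ, hsum⟩ := exists_integrable_hasSum_fourier (fun k => (hγ k).smul (c k))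
    (by simpa only [hnorm] using summable_abs_choose hp)
  have hfourier (k : ℕ) (ξ : ℝ) : 𝓕 (c k • γ k) ξ =
      (-1) ^ k * Ring.choose (p : ℂ) k * (1 + 2 * π * I * ξ) ^ (-(q - p + k) : ℂ) := by
    rw [fourierIntegral_const_smul, fourier_gammaPDFReal (hshape k) one_pos]
    push_cast
    rw [div_one, smul_eq_mul]
  have hne (ξ : ℝ) (hξ : ξ ≠ 0) :
      𝓕 κ ξ = (2 * π * I * ξ) ^ (p : ℂ) * (1 + 2 * π * I * ξ) ^ (-q : ℂ) := by
    have h := hasSum_sub_one_cpow_mul_cpow_neg (u := 1 + 2 * π * I * ξ) (by simp)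
      (one_lt_norm_one_add_two_pi_I_mul hξ) p q
    simp only [add_sub_cancel_left, ← hfourier] at h
    exact (hsum ξ).unique h
  exact ⟨κ, hκ, congrFun ((continuous_fourierIntegral hκ).ext_on (dense_compl_singleton 0)
    ((continuous_two_pi_I_mul_cpow hp).mul (continuous_one_add_two_pi_I_mul_cpow (-q))) hne)⟩

end Kernel

section IntegrableDerivs

variable {E : Type*} [NormedAddCommGroup E]

/-- `f` is `m` times continuously differentiable and its derivatives of order `0, …, m` are all
integrable: the classical part of the Sobolev space `W^{m,1}(ℝ)`. -/
structure HasIntegrableDerivs [NormedSpace ℝ E] (m : ℕ) (f : ℝ → E) : Prop where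
  contDiff : ContDiff ℝ m f
  integrable_iteratedDeriv : ∀ n ≤ m, Integrable (iteratedDeriv n f)

lemma norm_le_add_integral_norm_deriv [NormedSpace ℝ E] [CompleteSpace E] {h : ℝ → E}
    (hd : Differentiable ℝ h) (hi : Integrable (deriv h)) (x : ℝ) :
    ‖h x‖ ≤ ‖h 0‖ + ∫ t, ‖deriv h t‖ := by
  have hftc : ∫ t in (0 : ℝ)..x, deriv h t = h x - h 0 :=
    intervalIntegral.integral_deriv_eq_sub (fun t _ => hd t) hi.intervalIntegrable
  calc ‖h x‖ = ‖h 0 + ∫ t in (0 : ℝ)..x, deriv h t‖ := by rw [hftc, add_sub_cancel]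
    _ ≤ ‖h 0‖ + ‖∫ t in (0 : ℝ)..x, deriv h t‖ := norm_add_le _ _
    _ ≤ ‖h 0‖ + ∫ t in Set.uIoc 0 x, ‖deriv h t‖ := by
      gcongr
      exact intervalIntegral.norm_integral_le_integral_norm_uIoc
    _ ≤ ‖h 0‖ + ∫ t, ‖deriv h t‖ :=
      add_le_add_right (setIntegral_le_integral hi.norm (ae_of_all _ fun t => norm_nonneg _)) _

namespace HasIntegrableDerivs

section Real

variable [NormedSpace ℝ E] {m : ℕ} {f : ℝ → E}

lemma integrable (hf : HasIntegrableDerivs m f) : Integrable f := by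
  simpa using hf.integrable_iteratedDeriv 0 m.zero_le

lemma integrable_deriv (hf : HasIntegrableDerivs (m + 1) f) : Integrable (deriv f) := by
  simpa [iteratedDeriv_one] using hf.integrable_iteratedDeriv 1 (by lia)

lemma differentiable (hf : HasIntegrableDerivs (m + 1) f) : Differentiable ℝ f :=
  hf.contDiff.differentiable (by simp)

lemma bddAbove_range_norm [CompleteSpace E] (hf : HasIntegrableDerivs (m + 1) f) :
    BddAbove (Set.range fun x => ‖f x‖) :=
  ⟨_, Set.forall_mem_range.2
    (norm_le_add_integral_norm_deriv hf.differentiable hf.integrable_deriv)⟩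

lemma add_deriv (hf : HasIntegrableDerivs (m + 1) f) : HasIntegrableDerivs m (f + deriv f) := by
  have hf' : ContDiff ℝ m f := hf.contDiff.of_le (by simp)
  have hderiv : ContDiff ℝ m (deriv f) := hf.contDiff.deriv'
  refine ⟨hf'.add hderiv, fun n hn => ?_⟩
  have hn' : (n : WithTop ℕ∞) ≤ m := by exact_mod_cast hn
  have hsplit : iteratedDeriv n (f + deriv f) = iteratedDeriv n f + iteratedDeriv (n + 1) f := by
    ext x
    rw [iteratedDeriv_succ', iteratedDeriv_add (hf'.of_le hn').contDiffAt
      (hderiv.of_le hn').contDiffAt, Pi.add_apply]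
  rw [hsplit]
  exact (hf.integrable_iteratedDeriv n (by lia)).add (hf.integrable_iteratedDeriv (n + 1) (by lia))

end Real

variable [NormedSpace ℂ E] {m : ℕ} {f : ℝ → E}

lemma fourier_add_deriv (hf : HasIntegrableDerivs (m + 1) f) (ξ : ℝ) :
    𝓕 (f + deriv f) ξ = (1 + 2 * π * I * ξ) • 𝓕 f ξ := by
  rw [fourierIntegral_add hf.integrable hf.integrable_deriv,
    fourier_deriv hf.integrable hf.differentiable hf.integrable_deriv, add_smul, one_smul]

theorem exists_fourier_eq_pow_smul (n : ℕ) (hf : HasIntegrableDerivs (m + n) f) :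
    ∃ h : ℝ → E, HasIntegrableDerivs m h ∧
      ∀ ξ : ℝ, 𝓕 h ξ = (1 + 2 * π * I * ξ) ^ n • 𝓕 f ξ := by
  induction n generalizing f with
  | zero => exact ⟨f, hf, by simp⟩
  | succ n ih =>
    obtain ⟨h, hh, hfourier⟩ := ih hf.add_deriv
    exact ⟨h, hh, fun ξ => by rw [hfourier, hf.fourier_add_deriv, smul_smul, pow_succ]⟩

lemma exists_norm_pow_mul_norm_fourier_le (hf : HasIntegrableDerivs m f) :
    ∃ C, ∀ ξ : ℝ, ‖1 + 2 * π * I * (ξ : ℂ)‖ ^ m * ‖𝓕 f ξ‖ ≤ C := by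
  obtain ⟨h, -, hfourier⟩ := exists_fourier_eq_pow_smul (m := 0) m (by rwa [zero_add])
  refine ⟨∫ x, ‖h x‖, fun ξ => ?_⟩
  rw [← norm_pow, ← norm_smul, ← hfourier]
  exact norm_fourierIntegral_le_integral_norm h ξ

theorem integrable_cpow_smul_fourier (hf : HasIntegrableDerivs m f) {p : ℝ} (hp : 0 < p)
    (hm : p + 1 < m) :
    Integrable fun ξ : ℝ => (2 * π * I * ξ) ^ (p : ℂ) • 𝓕 f ξ := by
  obtain ⟨C, hC⟩ := hf.exists_norm_pow_mul_norm_fourier_le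
  have hexponent : (Module.finrank ℝ ℝ : ℝ) < m - p := by
    rw [Module.finrank_self, Nat.cast_one]
    linarith
  have hdom : Integrable fun ξ : ℝ => C * (1 + ‖2 * π * ξ‖ ^ 2) ^ (-(m - p) / 2) :=
    ((integrable_rpow_neg_one_add_norm_sq hexponent).comp_mul_left' two_pi_pos.ne').const_mul C
  refine hdom.mono' ((continuous_two_pi_I_mul_cpow hp).smul
    (continuous_fourierIntegral hf.integrable)).aestronglyMeasurable (ae_of_all _ fun ξ => ?_)
  set u : ℝ := ‖1 + 2 * π * I * (ξ : ℂ)‖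
  have hsq : u ^ 2 = 1 + ‖2 * π * ξ‖ ^ 2 := by
    rw [sq_norm_one_add_two_pi_I_mul, Real.norm_eq_abs, sq_abs]
  have hu0 : 0 < u := norm_pos_iff.2 (one_add_two_pi_I_mul_ne_zero ξ)
  have hle : ‖2 * π * I * (ξ : ℂ)‖ ≤ u := by
    rw [← sq_le_sq₀ (norm_nonneg _) hu0.le, hsq]
    simp [mul_pow]
  calc ‖(2 * π * I * ξ) ^ (p : ℂ) • 𝓕 f ξ‖
      = ‖2 * π * I * (ξ : ℂ)‖ ^ p * ‖𝓕 f ξ‖ := by rw [norm_smul, Complex.norm_cpow_real]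
    _ ≤ u ^ p * ‖𝓕 f ξ‖ := by gcongr
    _ = (u ^ m * ‖𝓕 f ξ‖) * u ^ (-(m - p)) := by
      rw [mul_right_comm, ← rpow_natCast, ← rpow_add hu0]
      ring_nf
    _ ≤ C * u ^ (-(m - p)) := by gcongr; exact hC ξ
    _ = C * (1 + ‖2 * π * ξ‖ ^ 2) ^ (-(m - p) / 2) := by
      rw [← hsq, ← rpow_natCast, ← rpow_mul hu0.le]
      ring_nf

end HasIntegrableDerivs

end IntegrableDerivs

section FractionalDerivative

variable {E : Type*} [NormedAddCommGroup E] [NormedSpace ℂ E]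

theorem HasIntegrableDerivs.exists_fourier_eq_cpow_smul [CompleteSpace E] {m : ℕ} {f : ℝ → E}
    (hf : HasIntegrableDerivs m f) {p : ℝ} (hp : 0 < p) (hm : p + 1 < m) :
    ∃ g : ℝ → E, Continuous g ∧ Integrable g ∧
      𝓕 g = fun ξ : ℝ => (2 * π * I * ξ) ^ (p : ℂ) • 𝓕 f ξ := by
  have hm1 : 1 ≤ m := by exact_mod_cast (by linarith : (1 : ℝ) ≤ m)
  obtain ⟨n, rfl⟩ := Nat.exists_eq_add_of_le hm1
  have hpn : p < n := by push_cast at hm; linarith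
  obtain ⟨h, hh, hh_fourier⟩ := hf.exists_fourier_eq_pow_smul n
  obtain ⟨κ, hκ, hκ_fourier⟩ := exists_integrable_fourier_eq_cpow_mul_cpow_neg hp hpn
  refine ⟨κ ⋆[.lsmul ℂ ℂ] h, ?_, hκ.integrable_convolution _ hh.integrable, ?_⟩
  · exact hh.bddAbove_range_norm.continuous_convolution_right_of_integrable _ hκ
      hh.contDiff.continuous
  · ext ξ
    rw [fourier_smul_convolution_eq hκ hh.integrable, hκ_fourier, hh_fourier, smul_smul,
      mul_assoc, Complex.cpow_neg, Complex.ofReal_natCast, Complex.cpow_natCast,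
      inv_mul_cancel₀ (pow_ne_zero n (one_add_two_pi_I_mul_ne_zero ξ)), mul_one]

lemma integral_cexp_neg_smul_eq_fourier (f : ℝ → E) (ω : ℝ) :
    ∫ x : ℝ, Complex.exp (-(I * ω * x)) • f x = 𝓕 f (ω / (2 * π)) := by
  rw [fourier_real_eq_integral_exp_smul]
  congr 1 with x
  congr 2
  push_cast
  field_simp

lemma integral_cexp_smul_eq_fourierInv (G : ℝ → E) (x : ℝ) :
    (1 / (2 * (π : ℂ))) • ∫ ω : ℝ, Complex.exp (I * ω * x) • G ω =
      𝓕⁻ (fun ξ : ℝ => G (2 * π * ξ)) x := by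
  have hexp (ξ : ℝ) :
      Complex.exp (↑(2 * π * inner ℝ ξ x) * I) = Complex.exp (I * ↑(2 * π * ξ) * x) := by
    congr 1
    simp only [RCLike.inner_apply, conj_trivial]
    push_cast
    ring
  have hscale := Measure.integral_comp_mul_left
    (fun ω : ℝ => Complex.exp (I * ω * x) • G ω) (2 * π)
  rw [fourierInv_eq']
  simp only [hexp]
  rw [hscale, abs_of_pos (inv_pos.2 two_pi_pos), ← Complex.coe_smul]
  push_cast
  rw [one_div]

theorem stmt_13_general [CompleteSpace E] (p : ℝ) (hp : 0 < p) (m : ℕ) (hm : p + 1 < m)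
    (f : ℝ → E) (hf : ContDiff ℝ m f) (hint : ∀ n ≤ m, Integrable (iteratedDeriv n f))
    (F : ℝ → E) (hF : ∀ ω : ℝ, F ω = ∫ x : ℝ, Complex.exp (-(I * ω * x)) • f x)
    (fp : ℝ → E)
    (hfp : ∀ x : ℝ, fp x = (1 / (2 * (π : ℂ))) •
      ∫ ω : ℝ, Complex.exp (I * ω * x) • (I * ω) ^ (p : ℂ) • F ω) :
    (∀ x : ℝ, Integrable fun ω : ℝ => Complex.exp (I * ω * x) • (I * ω) ^ (p : ℂ) • F ω) ∧
    Continuous fp ∧ Integrable fp ∧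
    ∀ ω : ℝ, ∫ x : ℝ, Complex.exp (-(I * ω * x)) • fp x = (I * ω) ^ (p : ℂ) • F ω := by
  have hderivs : HasIntegrableDerivs m f := ⟨hf, hint⟩
  have hmult : (fun ξ : ℝ => (I * ↑(2 * π * ξ)) ^ (p : ℂ) • F (2 * π * ξ)) =
      fun ξ : ℝ => (2 * π * I * ξ) ^ (p : ℂ) • 𝓕 f ξ := by
    ext ξ
    rw [hF, integral_cexp_neg_smul_eq_fourier, mul_div_cancel_left₀ ξ two_pi_pos.ne']
    push_cast
    ring_nf
  obtain ⟨g, hg_cont, hg_int, hg_fourier⟩ := hderivs.exists_fourier_eq_cpow_smul hp hm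
  have hmult_int := hderivs.integrable_cpow_smul_fourier hp hm
  obtain rfl : fp = g := by
    ext x
    rw [hfp, integral_cexp_smul_eq_fourierInv (fun ω : ℝ => (I * ω) ^ (p : ℂ) • F ω), hmult,
      ← hg_fourier, hg_cont.fourierInv_fourier_eq hg_int (hg_fourier ▸ hmult_int)]
  refine ⟨fun x => ?_, hg_cont, hg_int, fun ω => ?_⟩
  · rw [← hmult, integrable_comp_mul_left_iff (fun ω : ℝ => (I * ω) ^ (p : ℂ) • F ω)
      two_pi_pos.ne'] at hmult_int
    refine hmult_int.bdd_smul 1 (by fun_prop) (ae_of_all _ fun ω => ?_)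
    simp [Complex.norm_exp]
  · rw [integral_cexp_neg_smul_eq_fourier, hg_fourier, hF, integral_cexp_neg_smul_eq_fourier]
    push_cast
    congr 2
    field_simp

end FractionalDerivative

/-- For `p > 0` and `m > p + 1`, if `f` is `m` times continuously differentiable with all
derivatives up to order `m` integrable and `x·f(x)` integrable, then the fractional derivative
`f^{(p)}(x) = (1/2π) ∫ (iω)^p F(ω) e^{iωx} dω` (with `F = 𝓕f`) is given by an absolutely
convergent integral, is continuous and integrable, and `𝓕(f^{(p)})(ω) = (iω)^p F(ω)`. -/
theorem stmt_13 (p : ℝ) (hp : 0 < p) (m : ℕ) (hm : (m : ℝ) > p + 1)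
    (f : ℝ → ℂ) (hf : ContDiff ℝ m f)
    (hint : ∀ n ≤ m, Integrable (iteratedDeriv n f))
    (hxf : Integrable (fun x : ℝ => (x : ℂ) * f x))
    (F : ℝ → ℂ) (hF : ∀ ω : ℝ, F ω = ∫ x : ℝ, f x * Complex.exp (-(Complex.I * ω * x)))
    (fp : ℝ → ℂ)
    (hfp : ∀ x : ℝ, fp x = (1 / (2 * (Real.pi : ℂ))) *
      ∫ ω : ℝ, (Complex.I * ω) ^ (p : ℂ) * F ω * Complex.exp (Complex.I * ω * x)) :
    (∀ x : ℝ, Integrable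
      (fun ω : ℝ => (Complex.I * ω) ^ (p : ℂ) * F ω * Complex.exp (Complex.I * ω * x))) ∧
    Continuous fp ∧ Integrable fp ∧
    ∀ ω : ℝ, (∫ x : ℝ, fp x * Complex.exp (-(Complex.I * ω * x))) =
      (Complex.I * ω) ^ (p : ℂ) * F ω := by
  simpa only [smul_eq_mul, mul_comm] using
    stmt_13_general p hp m hm f hf hint F (by simpa only [smul_eq_mul, mul_comm] using hF) fp
      (by simpa only [smul_eq_mul, mul_comm] using hfp)
end

section
/- Let n be a nonnegative integer and let m be an integer with m > n + 1. Let f : ℝ → ℂ be m times continuously differentiable with f^{(k)} ∈ L¹(ℝ) for every 0 ≤ k ≤ m, and let F = 𝓕f. Then for every real x, (1/(2π)) ∫_ℝ (iω)^n F(ω) e^{iωx} dω = f^{(n)}(x), the classical n-th derivative of f at x; i.e., the fractional-derivative formula recovers the usual derivative when the order is an integer. -/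
open MeasureTheory Real

/-!
Two integrations by parts turn integrability of `g` and `g''` into the decay
`(1 + ω²) ‖ĝ(ω)‖ ≤ ‖g‖₁ + ‖g''‖₁`, so `ĝ` is integrable and Fourier inversion holds for `g`.
For `g = f⁽ⁿ⁾` the transform is `(iω)ⁿ F(ω)`, and the two extra derivatives of `g` are those
provided by `m ≥ n + 2`.
-/

section AngularFourier

open scoped FourierTransform

variable {E : Type*} [NormedAddCommGroup E] [NormedSpace ℂ E] {f : ℝ → E}

/-- The Fourier transform on `ℝ` as a function of the angular frequency `ω`, with kernel
`e^{-iωx}`; Mathlib's `𝓕` has kernel `e^{-2πiξx}` instead. -/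
noncomputable def angularFourier (f : ℝ → E) (ω : ℝ) : E :=
  ∫ x : ℝ, Complex.exp (-(Complex.I * ω * x)) • f x

lemma angularFourier_eq_fourier_div_two_pi (f : ℝ → E) :
    angularFourier f = fun ω ↦ 𝓕 f (ω / (2 * π)) := by
  ext ω
  rw [angularFourier, fourier_real_eq_integral_exp_smul]
  congr! 4 with x
  push_cast
  field_simp

lemma norm_angularFourier_le_integral_norm (f : ℝ → E) (ω : ℝ) :
    ‖angularFourier f ω‖ ≤ ∫ x, ‖f x‖ := by
  rw [angularFourier_eq_fourier_div_two_pi]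
  exact VectorFourier.norm_fourierIntegral_le_integral_norm _ _ _ _ _

lemma continuous_angularFourier (hf : Integrable f) : Continuous (angularFourier f) := by
  have h𝓕 : Continuous (𝓕 f) :=
    VectorFourier.fourierIntegral_continuous continuous_fourierChar continuous_inner hf
  rw [angularFourier_eq_fourier_div_two_pi]
  fun_prop

lemma angularFourier_iteratedDeriv {n : ℕ} (hf : ContDiff ℝ n f)
    (hint : ∀ k ≤ n, Integrable (iteratedDeriv k f)) (ω : ℝ) :
    angularFourier (iteratedDeriv n f) ω = (Complex.I * ω) ^ n • angularFourier f ω := by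
  have h𝓕 := fourier_iteratedDeriv (N := n) (n := n) (mod_cast hf)
    (fun k hk ↦ hint k (mod_cast hk)) le_rfl
  simp only [angularFourier_eq_fourier_div_two_pi, h𝓕]
  congr 2
  push_cast
  field_simp

lemma one_add_sq_mul_norm_angularFourier_le (hf : ContDiff ℝ 2 f)
    (hint : ∀ k ≤ 2, Integrable (iteratedDeriv k f)) (ω : ℝ) :
    (1 + ω ^ 2) * ‖angularFourier f ω‖ ≤ (∫ x, ‖f x‖) + ∫ x, ‖iteratedDeriv 2 f x‖ :=
  calc (1 + ω ^ 2) * ‖angularFourier f ω‖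
      = ‖angularFourier f ω‖ + ‖angularFourier (iteratedDeriv 2 f) ω‖ := by
        simp [angularFourier_iteratedDeriv hf hint, norm_smul, add_mul]
    _ ≤ _ := add_le_add (norm_angularFourier_le_integral_norm _ _)
        (norm_angularFourier_le_integral_norm _ _)

lemma integrable_angularFourier (hf : ContDiff ℝ 2 f)
    (hint : ∀ k ≤ 2, Integrable (iteratedDeriv k f)) : Integrable (angularFourier f) := by
  have hf_int : Integrable f := by simpa using hint 0 (by lia)
  refine (integrable_inv_one_add_sq.const_mul
    ((∫ x, ‖f x‖) + ∫ x, ‖iteratedDeriv 2 f x‖)).mono'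
    (continuous_angularFourier hf_int).aestronglyMeasurable (.of_forall fun ω ↦ ?_)
  rw [← div_eq_mul_inv, le_div_iff₀' (by positivity)]
  exact one_add_sq_mul_norm_angularFourier_le hf hint ω

lemma angularFourier_inversion [CompleteSpace E] (hf : Integrable f)
    (hf' : Integrable (angularFourier f)) {x : ℝ} (hx : ContinuousAt f x) :
    (1 / (2 * π) : ℂ) • ∫ ω : ℝ, Complex.exp (Complex.I * ω * x) • angularFourier f ω = f x := by
  have h𝓕 : Integrable (𝓕 f) := by
    rw [angularFourier_eq_fourier_div_two_pi] at hf'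
    exact (integrable_comp_div_iff _ two_pi_pos.ne').mp hf'
  have hkernel (ω : ℝ) : (2 * π * ↑(ω / (2 * π)) * x * Complex.I : ℂ) = Complex.I * ω * x := by
    push_cast
    field_simp
  have hsubst := Measure.integral_comp_div
    (fun ξ : ℝ ↦ Complex.exp (2 * π * ξ * x * Complex.I) • 𝓕 f ξ) (2 * π)
  simp only [hkernel, abs_of_pos two_pi_pos] at hsubst
  have hscale : (1 / (2 * π) * ↑(2 * π) : ℂ) = 1 := by
    push_cast
    field_simp
  calc (1 / (2 * π) : ℂ) • ∫ ω : ℝ, Complex.exp (Complex.I * ω * x) • angularFourier f ω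
      = ∫ ξ : ℝ, Complex.exp (2 * π * ξ * x * Complex.I) • 𝓕 f ξ := by
        rw [angularFourier_eq_fourier_div_two_pi, hsubst, ← Complex.coe_smul, smul_smul, hscale,
          one_smul]
    _ = 𝓕⁻ (𝓕 f) x := by
        simp [fourierInv_eq', mul_assoc, mul_comm, mul_left_comm]
    _ = f x := hf.fourierInv_fourier_eq h𝓕 hx

end AngularFourier

lemma iteratedDeriv_iteratedDeriv {𝕜 F : Type*} [NontriviallyNormedField 𝕜]
    [NormedAddCommGroup F] [NormedSpace 𝕜 F] (k n : ℕ) (f : 𝕜 → F) :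
    iteratedDeriv k (iteratedDeriv n f) = iteratedDeriv (k + n) f := by
  simp only [iteratedDeriv_eq_iterate, Function.iterate_add_apply]

theorem stmt_14_general {E : Type*} [NormedAddCommGroup E] [NormedSpace ℂ E] [CompleteSpace E]
    (n : ℕ) (f : ℝ → E) (hf : ContDiff ℝ (n + 2) f)
    (hint : ∀ k ≤ n + 2, Integrable (iteratedDeriv k f)) (x : ℝ) :
    (1 / (2 * π) : ℂ) • ∫ ω : ℝ,
        Complex.exp (Complex.I * ω * x) • (Complex.I * ω) ^ n • angularFourier f ω =
      iteratedDeriv n f x := by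
  have hderiv : ContDiff ℝ 2 (iteratedDeriv n f) := by
    rw [iteratedDeriv_eq_iterate]
    exact ContDiff.iterate_deriv' 2 n (mod_cast add_comm n 2 ▸ hf)
  have hderiv_int : ∀ k ≤ 2, Integrable (iteratedDeriv k (iteratedDeriv n f)) := fun k hk ↦ by
    rw [iteratedDeriv_iteratedDeriv]
    exact hint _ (by lia)
  have htransform := angularFourier_iteratedDeriv (n := n) (hf.of_le (mod_cast n.le_add_right 2))
    fun k hk ↦ hint k (by lia)
  simp only [← htransform]
  exact angularFourier_inversion (hint n (by lia)) (integrable_angularFourier hderiv hderiv_int)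
    hderiv.continuous.continuousAt

/-- For a nonnegative integer `n` and `m > n + 1`, if `f` is `m` times continuously
differentiable with all derivatives up to order `m` integrable and `F = 𝓕f`, then
`(1/2π) ∫ (iω)^n F(ω) e^{iωx} dω = f^{(n)}(x)`: the fractional-derivative formula recovers
the classical derivative at integer orders. -/
theorem stmt_14 (n m : ℕ) (hm : m > n + 1) (f : ℝ → ℂ) (hf : ContDiff ℝ m f)
    (hint : ∀ k ≤ m, Integrable (iteratedDeriv k f))
    (F : ℝ → ℂ) (hF : ∀ ω : ℝ, F ω = ∫ x : ℝ, f x * Complex.exp (-(Complex.I * ω * x))) :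
    ∀ x : ℝ, (1 / (2 * (Real.pi : ℂ))) *
        (∫ ω : ℝ, (Complex.I * ω) ^ n * F ω * Complex.exp (Complex.I * ω * x)) =
      iteratedDeriv n f x := by
  have hF' : F = angularFourier f := by
    ext ω
    simp only [hF, angularFourier, smul_eq_mul, mul_comm]
  intro x
  rw [hF', ← stmt_14_general n f (hf.of_le (mod_cast hm)) (fun k hk ↦ hint k (by lia)) x]
  simp only [smul_eq_mul, mul_comm]
end

section
/- Let p > 0 and let m be an integer with m > p + 1. Let f : ℝ → ℂ be m times continuously differentiable with f^{(n)} ∈ L¹(ℝ) for every 0 ≤ n ≤ m. Then for θ ∈ {e,o}, the functions φ^θ_p(·,ρ) converge uniformly on ℝ to the identically zero function as ρ → 0⁺, i.e. sup_{x∈ℝ} |φ^θ_p(x,ρ)| → 0 as ρ → 0⁺. -/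
open MeasureTheory Real

/-- The even frequency-domain multiplier `(iω)^p + (-iω)^p` (principal branch;
`0^p = 0` for `p > 0`). -/
noncomputable def kerE (p ω : ℝ) : ℂ :=
  (Complex.I * ω) ^ (p : ℂ) + (-(Complex.I * ω)) ^ (p : ℂ)

/-- The odd frequency-domain multiplier `(iω)^p - (-iω)^p`. -/
noncomputable def kerO (p ω : ℝ) : ℂ :=
  (Complex.I * ω) ^ (p : ℂ) - (-(Complex.I * ω)) ^ (p : ℂ)

/-- `φ^e_p(x,ρ) = (1/2π) ∫ F(ω)((iω)^p + (-iω)^p) e^{-ω²/(2ρ²)} e^{iωx} dω`. -/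
noncomputable def phiE (F : ℝ → ℂ) (p x ρ : ℝ) : ℂ :=
  (1 / (2 * (Real.pi : ℂ))) *
    ∫ ω : ℝ, F ω * kerE p ω * ((Real.exp (-ω ^ 2 / (2 * ρ ^ 2)) : ℝ) : ℂ) *
      Complex.exp (Complex.I * ω * x)

/-- `φ^o_p(x,ρ) = (1/2π) ∫ F(ω)((iω)^p - (-iω)^p) e^{-ω²/(2ρ²)} e^{iωx} dω`. -/
noncomputable def phiO (F : ℝ → ℂ) (p x ρ : ℝ) : ℂ :=
  (1 / (2 * (Real.pi : ℂ))) *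
    ∫ ω : ℝ, F ω * kerO p ω * ((Real.exp (-ω ^ 2 / (2 * ρ ^ 2)) : ℝ) : ℂ) *
      Complex.exp (Complex.I * ω * x)

/-!
The integrand of `φ^θ_p(x, ρ)` has modulus at most `2 ‖F‖_∞ |ω|^p e^{-ω²/(2ρ²)}`, whatever `x` is.
The integral of this bound is a constant times `ρ^{p+1}`, so it tends to zero with `ρ` as soon as
`p > -1`; and `‖F‖_∞` is finite because `F` is the Fourier transform of an integrable function.
-/

open Filter Topology

section GaussianMoments

variable {b s : ℝ}

lemma integrable_abs_rpow_mul_exp_neg_mul_sq (hb : 0 < b) (hs : -1 < s) :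
    Integrable fun x : ℝ => |x| ^ s * exp (-b * x ^ 2) := by
  have h := (integrable_fun_norm_addHaar (volume : Measure ℝ)
    (f := fun x => x ^ s * exp (-b * x ^ 2))).2
    (by simpa using integrableOn_rpow_mul_exp_neg_mul_sq hb hs)
  simpa only [norm_eq_abs, sq_abs] using h

lemma integral_abs_rpow_mul_exp_neg_mul_sq (hb : 0 < b) (hs : -1 < s) :
    ∫ x : ℝ, |x| ^ s * exp (-b * x ^ 2) = b ^ (-(s + 1) / 2) * Gamma ((s + 1) / 2) := by
  calc ∫ x : ℝ, |x| ^ s * exp (-b * x ^ 2)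
      = 2 * ∫ x in Set.Ioi (0 : ℝ), x ^ s * exp (-b * x ^ (2 : ℝ)) := by
        rw [← integral_comp_abs]
        simp only [rpow_two, sq_abs]
    _ = b ^ (-(s + 1) / 2) * Gamma ((s + 1) / 2) := by
        rw [integral_rpow_mul_exp_neg_mul_rpow two_pos hs hb]
        ring

end GaussianMoments

/-- The inverse Fourier transform at `x` of `G` damped by the Gaussian `e^{-ω²/(2ρ²)}`. Both `phiE`
and `phiO` are of this form, with `G` the product of `F` and the multiplier. At `ρ = 0` division by
zero turns the Gaussian into the constant `1`. -/
noncomputable def gaussianFourierInv (G : ℝ → ℂ) (x ρ : ℝ) : ℂ :=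
  (1 / (2 * (π : ℂ))) *
    ∫ ω : ℝ, G ω * ((exp (-ω ^ 2 / (2 * ρ ^ 2)) : ℝ) : ℂ) * Complex.exp (Complex.I * ω * x)

section PowerBound

variable {G : ℝ → ℂ} {C p : ℝ}

lemma norm_gaussianFourierInv_le (hp : -1 < p) (hG : ∀ᵐ ω, ‖G ω‖ ≤ C * |ω| ^ p)
    {ρ : ℝ} (hρ : ρ ≠ 0) (x : ℝ) :
    ‖gaussianFourierInv G x ρ‖ ≤
      C / (2 * π) * Gamma ((p + 1) / 2) * (2 * ρ ^ 2) ^ ((p + 1) / 2) := by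
  have hb : 0 < (2 * ρ ^ 2)⁻¹ := by positivity
  have integrand_le : ∀ᵐ ω : ℝ, ‖G ω * ((exp (-ω ^ 2 / (2 * ρ ^ 2)) : ℝ) : ℂ) *
      Complex.exp (Complex.I * ω * x)‖ ≤ C * (|ω| ^ p * exp (-(2 * ρ ^ 2)⁻¹ * ω ^ 2)) := by
    filter_upwards [hG] with ω hω
    have norm_character : ‖Complex.exp (Complex.I * ω * x)‖ = 1 := by simp [Complex.norm_exp]
    have exponent_eq : -ω ^ 2 / (2 * ρ ^ 2) = -(2 * ρ ^ 2)⁻¹ * ω ^ 2 := by ring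
    rw [norm_mul, norm_mul, norm_character, mul_one, Complex.norm_real, norm_eq_abs, abs_exp,
      exponent_eq, ← mul_assoc]
    gcongr
  have integral_le := norm_integral_le_of_norm_le
    ((integrable_abs_rpow_mul_exp_neg_mul_sq hb hp).const_mul C) integrand_le
  rw [integral_const_mul, integral_abs_rpow_mul_exp_neg_mul_sq hb hp, inv_rpow (by positivity),
    ← rpow_neg (by positivity), ← neg_div, neg_neg] at integral_le
  have norm_prefactor : ‖1 / (2 * (π : ℂ))‖ = 1 / (2 * π) := by simp [abs_of_pos pi_pos]
  rw [gaussianFourierInv, norm_mul, norm_prefactor]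
  calc _ ≤ 1 / (2 * π) * (C * ((2 * ρ ^ 2) ^ ((p + 1) / 2) * Gamma ((p + 1) / 2))) := by gcongr
    _ = _ := by ring

lemma tendstoUniformly_gaussianFourierInv (hp : -1 < p) (hG : ∀ᵐ ω, ‖G ω‖ ≤ C * |ω| ^ p) :
    TendstoUniformly (fun ρ x => gaussianFourierInv G x ρ) (fun _ => 0) (𝓝[>] 0) := by
  have hexp : 0 < (p + 1) / 2 := by linarith
  have bound_tendsto : Tendsto
      (fun ρ : ℝ => C / (2 * π) * Gamma ((p + 1) / 2) * (2 * ρ ^ 2) ^ ((p + 1) / 2))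
      (𝓝[>] 0) (𝓝 0) := by
    have hcont : Continuous
        fun ρ : ℝ => C / (2 * π) * Gamma ((p + 1) / 2) * (2 * ρ ^ 2) ^ ((p + 1) / 2) := by
      fun_prop (disch := exact hexp.le)
    simpa [zero_rpow hexp.ne'] using (hcont.tendsto 0).mono_left nhdsWithin_le_nhds
  rw [Metric.tendstoUniformly_iff]
  intro ε hε
  filter_upwards [self_mem_nhdsWithin, bound_tendsto.eventually_lt_const hε] with ρ hρ hlt x
  rw [dist_zero_left]
  exact (norm_gaussianFourierInv_le hp hG hρ.ne' x).trans_lt hlt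

lemma tendstoUniformly_gaussianFourierInv_mul {F K : ℝ → ℂ} (hp : -1 < p) (hF : MemLp F ⊤)
    (hK : ∀ ω, ‖K ω‖ ≤ C * |ω| ^ p) :
    TendstoUniformly (fun ρ x => gaussianFourierInv (fun ω => F ω * K ω) x ρ) (fun _ => 0)
      (𝓝[>] 0) := by
  refine tendstoUniformly_gaussianFourierInv (C := lpNorm F ⊤ volume * C) hp ?_
  filter_upwards [ae_le_lpNorm_exponent_top hF] with ω hω
  rw [norm_mul, mul_assoc]
  exact mul_le_mul hω (hK ω) (norm_nonneg _) lpNorm_nonneg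

end PowerBound

lemma norm_I_mul_cpow (p ω : ℝ) : ‖(Complex.I * ω) ^ (p : ℂ)‖ = |ω| ^ p := by
  simp [Complex.norm_cpow_real]

lemma norm_neg_I_mul_cpow (p ω : ℝ) : ‖(-(Complex.I * ω)) ^ (p : ℂ)‖ = |ω| ^ p := by
  simp [Complex.norm_cpow_real]

lemma norm_kerE_le (p ω : ℝ) : ‖kerE p ω‖ ≤ 2 * |ω| ^ p := by
  refine (norm_add_le _ _).trans_eq ?_
  rw [norm_I_mul_cpow, norm_neg_I_mul_cpow, two_mul]

lemma norm_kerO_le (p ω : ℝ) : ‖kerO p ω‖ ≤ 2 * |ω| ^ p := by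
  refine (norm_sub_le _ _).trans_eq ?_
  rw [norm_I_mul_cpow, norm_neg_I_mul_cpow, two_mul]

lemma memLp_top_integral_mul_exp_neg_I_mul {μ ν : Measure ℝ} {f : ℝ → ℂ} (hf : Integrable f μ) :
    MemLp (fun ω : ℝ => ∫ x : ℝ, f x * Complex.exp (-(Complex.I * ω * x)) ∂μ) ⊤ ν := by
  have norm_integrand (ω x : ℝ) : ‖f x * Complex.exp (-(Complex.I * ω * x))‖ = ‖f x‖ := by
    simp [Complex.norm_exp]
  have hcont : Continuous fun ω : ℝ => ∫ x : ℝ, f x * Complex.exp (-(Complex.I * ω * x)) ∂μ :=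
    continuous_of_dominated
      (fun ω => hf.aestronglyMeasurable.mul (Continuous.aestronglyMeasurable (by fun_prop)))
      (fun ω => .of_forall fun x => (norm_integrand ω x).le) hf.norm
      (.of_forall fun x => by fun_prop)
  refine memLp_top_of_bound hcont.aestronglyMeasurable (∫ x, ‖f x‖ ∂μ) (.of_forall fun ω => ?_)
  simpa only [norm_integrand] using
    norm_integral_le_integral_norm (μ := μ) fun x : ℝ => f x * Complex.exp (-(Complex.I * ω * x))

theorem stmt_17_general {p : ℝ} (hp : -1 < p) {F : ℝ → ℂ} (hF : MemLp F ⊤) :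
    TendstoUniformly (fun ρ x => phiE F p x ρ) (fun _ => 0) (𝓝[>] 0) ∧
    TendstoUniformly (fun ρ x => phiO F p x ρ) (fun _ => 0) (𝓝[>] 0) :=
  ⟨tendstoUniformly_gaussianFourierInv_mul hp hF (norm_kerE_le p),
    tendstoUniformly_gaussianFourierInv_mul hp hF (norm_kerO_le p)⟩

/-- For `p > 0` and `m > p + 1`, the functions `φ^θ_p(·,ρ)` (θ = e, o) converge uniformly on `ℝ`
to the identically zero function as `ρ → 0⁺`. -/
theorem stmt_17 (p : ℝ) (hp : 0 < p) (m : ℕ) (hm : (m : ℝ) > p + 1)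
    (f : ℝ → ℂ) (hf : ContDiff ℝ m f)
    (hint : ∀ n ≤ m, Integrable (iteratedDeriv n f))
    (F : ℝ → ℂ) (hF : ∀ ω : ℝ, F ω = ∫ x : ℝ, f x * Complex.exp (-(Complex.I * ω * x))) :
    TendstoUniformly (fun ρ x => phiE F p x ρ) (fun _ => 0) (nhdsWithin 0 (Set.Ioi 0)) ∧
    TendstoUniformly (fun ρ x => phiO F p x ρ) (fun _ => 0) (nhdsWithin 0 (Set.Ioi 0)) := by
  obtain rfl := funext hF
  exact stmt_17_general (by linarith)
    (memLp_top_integral_mul_exp_neg_I_mul (by simpa using hint 0 m.zero_le))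
end
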